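/- Let s ≥ 1 be an integer and let B = {x ∈ ℤ² : x₁² + x₂² ≤ s} be the ℓ_2 ball in ℤ² of squared radius s. If there exists an additive subgroup Λ of ℤ² such that the translates c + B, c ∈ Λ, partition ℤ², then B = {x ∈ ℤ² : x₁² + x₂² ≤ t} for some t ∈ {1, 2, 4, 8}. Equivalently, there are no linear r-perfect codes in ℤ² in the ℓ_2 metric unless r ∈ {1, √2, 2, 2√2}. -/

import Mathlib

/-! Suppose the balls of radius `r = √s` centred at the points of `C` partition `ℤ²`, with `0 ∈ C`.
Every point of the plane is within `√2 / 2 < 3 / 4` of a lattice point. Hence any two centres are at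
distance more than `2r - 3/2`: otherwise both balls contain a lattice point near the midpoint of the
centres. Let `c` be the centre covering the lattice point just to the right of the ball at `0`. Some
point `z` of the plane has distance `r + 3/4` from both `0` and `c`, and a lattice point near `z`
lies outside the balls at `0` and `c`, so it is covered by a third ball, whose centre is also within
`r + 3/4` of `z`. As among three points within `R` of `z` some two are at distance at most `√3 R`,
this forces `2r - 3/2 < √3 (r + 3/4)`, hence `s < 121`.

For the remaining `s`, consider the lattice points just to the right of each row of the ball at `0`.
A ball at another centre that covers such a point has it as the left end of one of its rows, which
leaves few possibilities. Trying them from top to bottom, unless `s ≤ 4` or `s = 8`, always ends in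
two overlapping balls. -/

section InnerProductSpace

variable {V : Type*} [NormedAddCommGroup V] [InnerProductSpace ℝ V]

lemma norm_sub_sq_add_norm_sub_sq_add_norm_sub_sq_le (a b c : V) :
    ‖a - b‖ ^ 2 + ‖b - c‖ ^ 2 + ‖c - a‖ ^ 2 ≤ 3 * (‖a‖ ^ 2 + ‖b‖ ^ 2 + ‖c‖ ^ 2) := by
  have sum_nonneg : 0 ≤ ‖a + b + c‖ ^ 2 := sq_nonneg _
  rw [norm_add_sq_real, norm_add_sq_real, inner_add_left] at sum_nonneg
  rw [norm_sub_sq_real, norm_sub_sq_real, norm_sub_sq_real, real_inner_comm a c]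
  linarith

lemma sq_lt_three_mul_sq_of_lt_norm_sub {a b c z : V} {δ R : ℝ} (hδ : 0 ≤ δ)
    (ha : ‖a - z‖ ≤ R) (hb : ‖b - z‖ ≤ R) (hc : ‖c - z‖ ≤ R)
    (hab : δ < ‖a - b‖) (hbc : δ < ‖b - c‖) (hca : δ < ‖c - a‖) : δ ^ 2 < 3 * R ^ 2 := by
  have key := norm_sub_sq_add_norm_sub_sq_add_norm_sub_sq_le (a - z) (b - z) (c - z)
  simp only [sub_sub_sub_cancel_right] at key
  have hab' : δ ^ 2 < ‖a - b‖ ^ 2 := by gcongr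
  have hbc' : δ ^ 2 < ‖b - c‖ ^ 2 := by gcongr
  have hca' : δ ^ 2 < ‖c - a‖ ^ 2 := by gcongr
  have ha' : ‖a - z‖ ^ 2 ≤ R ^ 2 := by gcongr
  have hb' : ‖b - z‖ ^ 2 ≤ R ^ 2 := by gcongr
  have hc' : ‖c - z‖ ^ 2 ≤ R ^ 2 := by gcongr
  linarith

end InnerProductSpace

lemma exists_norm_eq_and_norm_sub_eq {c : ℂ} {R : ℝ} (hc : c ≠ 0) (hR : ‖c‖ ≤ 2 * R) :
    ∃ z : ℂ, ‖z‖ = R ∧ ‖z - c‖ = R := by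
  have hc' : 0 < ‖c‖ := norm_pos_iff.mpr hc
  have hquarter : 1 / 4 ≤ (R / ‖c‖) ^ 2 := by
    have : 1 / 2 ≤ R / ‖c‖ := by rw [le_div_iff₀ hc']; linarith
    nlinarith
  obtain ⟨t, ht⟩ : ∃ t : ℝ, 1 / 4 + t ^ 2 = (R / ‖c‖) ^ 2 :=
    ⟨√((R / ‖c‖) ^ 2 - 1 / 4), by rw [Real.sq_sqrt (by linarith)]; ring⟩
  have norm_mul_eq (w : ℂ) (hw : Complex.normSq w = 1 / 4 + t ^ 2) : ‖c * w‖ = R := by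
    rw [norm_mul, ← Real.sqrt_sq (norm_nonneg w), Complex.sq_norm, hw, ht,
      Real.sqrt_sq (div_nonneg (by linarith) hc'.le), mul_div_cancel₀ _ hc'.ne']
  refine ⟨c * ⟨1 / 2, t⟩, norm_mul_eq _ ?_, ?_⟩
  · rw [Complex.normSq_mk]; ring
  · rw [← mul_sub_one]
    refine norm_mul_eq _ ?_
    simp only [Complex.normSq_apply, Complex.sub_re, Complex.sub_im, Complex.one_re, Complex.one_im]
    ring

/-- The ball of squared radius `s` centred at `c` in `ℤ²` with the Euclidean metric. -/
def latticeBall (s : ℕ) (c : ℤ × ℤ) : Set (ℤ × ℤ) :=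
  {z | (z.1 - c.1) ^ 2 + (z.2 - c.2) ^ 2 ≤ s}

instance (s : ℕ) (c z : ℤ × ℤ) : Decidable (z ∈ latticeBall s c) :=
  inferInstanceAs (Decidable ((z.1 - c.1) ^ 2 + (z.2 - c.2) ^ 2 ≤ (s : ℤ)))

/-- `C` is a `√s`-perfect code: every lattice point lies in the ball of squared radius `s` around
exactly one point of `C`. -/
def IsPerfectCode (s : ℕ) (C : Set (ℤ × ℤ)) : Prop :=
  ∀ z, ∃! c, c ∈ C ∧ z ∈ latticeBall s c

/-- The point of the complex plane with the given integer coordinates. -/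
def toComplex (p : ℤ × ℤ) : ℂ := ⟨p.1, p.2⟩

lemma toComplex_zero : toComplex 0 = 0 := by
  simp [toComplex, Complex.ext_iff]

lemma toComplex_injective : Function.Injective toComplex := by
  rintro ⟨a, b⟩ ⟨c, d⟩ h
  simpa [toComplex, Complex.ext_iff] using h

lemma mem_latticeBall_iff_norm_sub_le {s : ℕ} {c z : ℤ × ℤ} :
    z ∈ latticeBall s c ↔ ‖toComplex z - toComplex c‖ ≤ √s := by
  rw [Real.le_sqrt (norm_nonneg _) (Nat.cast_nonneg s), Complex.sq_norm, Complex.normSq_apply]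
  simp only [latticeBall, toComplex, Complex.sub_re, Complex.sub_im, ← sq, Set.mem_ofPred_eq]
  norm_cast

lemma exists_norm_sub_toComplex_lt (z : ℂ) : ∃ p, ‖z - toComplex p‖ < 3 / 4 := by
  refine ⟨(round z.re, round z.im), lt_of_pow_lt_pow_left₀ 2 (by norm_num) ?_⟩
  have hre := sq_le_sq' (abs_le.mp (abs_sub_round z.re)).1 (abs_le.mp (abs_sub_round z.re)).2
  have him := sq_le_sq' (abs_le.mp (abs_sub_round z.im)).1 (abs_le.mp (abs_sub_round z.im)).2
  rw [Complex.sq_norm, Complex.normSq_apply]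
  simp only [toComplex, Complex.sub_re, Complex.sub_im, ← sq]
  linarith

/-- Half the length of row `y` of the ball of squared radius `s` at the origin, which consists of
the points `(x, y)` with `|x| ≤ halfWidth s y`; only meaningful for `y ^ 2 ≤ s`. -/
def halfWidth (s : ℕ) (y : ℤ) : ℕ := Nat.sqrt (s - y.natAbs ^ 2)

lemma sq_halfWidth_add_sq_le {s : ℕ} {y : ℤ} (hy : y ^ 2 ≤ s) :
    (halfWidth s y : ℤ) ^ 2 + y ^ 2 ≤ s := by
  have : halfWidth s y ^ 2 ≤ s - y.natAbs ^ 2 := Nat.sqrt_le' _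
  rw [← Int.natAbs_sq y] at hy ⊢
  norm_cast at hy ⊢
  omega

lemma lt_sq_halfWidth_add_one_add_sq (s : ℕ) (y : ℤ) :
    (s : ℤ) < (halfWidth s y + 1 : ℤ) ^ 2 + y ^ 2 := by
  have : s - y.natAbs ^ 2 < (halfWidth s y + 1) ^ 2 := Nat.lt_succ_sqrt' _
  rw [← Int.natAbs_sq y]
  norm_cast
  omega

lemma eq_halfWidth {s : ℕ} {x y : ℤ} (hle : x ^ 2 + y ^ 2 ≤ s) (hlt : s < (x + 1) ^ 2 + y ^ 2) :
    x = halfWidth s y := by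
  lift x to ℕ using by nlinarith
  rw [← Int.natAbs_sq y] at hle hlt
  norm_cast at hle hlt ⊢
  exact Nat.eq_sqrt'.mpr ⟨by omega, by omega⟩

/-- The indices of the nonempty rows of the ball of squared radius `s` at the origin, from top to
bottom. -/
def ballRows (s : ℕ) : List ℤ :=
  (List.range (2 * Nat.sqrt s + 1)).map fun i : ℕ => (Nat.sqrt s : ℤ) - i

lemma mem_ballRows {s : ℕ} {y : ℤ} : y ∈ ballRows s ↔ y ^ 2 ≤ s := by
  calc y ∈ ballRows s ↔ y.natAbs ≤ Nat.sqrt s := by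
        simp only [ballRows, List.mem_map, List.mem_range]
        exact ⟨by rintro ⟨i, hi, rfl⟩; omega,
          fun hy => ⟨(Nat.sqrt s - y).toNat, by omega, by omega⟩⟩
    _ ↔ y ^ 2 ≤ s := by
        rw [Nat.le_sqrt', ← Int.natAbs_sq y]
        norm_cast

/-- A computable sufficient condition for the balls of squared radius `s` around distinct points `c`
and `d` to overlap: they share a lattice point obtained by rounding the midpoint of `c` and `d`. The
first coordinate is rounded up, which loses nothing because the balls are exchanged by the
reflection in the midpoint. -/
def BallsConflict (s : ℕ) (c d : ℤ × ℤ) : Prop :=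
  c ≠ d ∧ ∃ y ∈ [(c.2 + d.2) / 2, (c.2 + d.2 + 1) / 2],
    ((c.1 + d.1 + 1) / 2, y) ∈ latticeBall s c ∧ ((c.1 + d.1 + 1) / 2, y) ∈ latticeBall s d

instance (s : ℕ) (c d : ℤ × ℤ) : Decidable (BallsConflict s c d) :=
  inferInstanceAs (Decidable (_ ∧ _))

/-- Backtracking search: no set of pairwise non-conflicting centres containing the list `L` covers
the lattice points just to the right of the rows `ys` of the ball at the origin by balls which have
these points as left ends of their rows. The index `j` is the row of the new ball. -/
def contourBlocked (s : ℕ) : List ℤ → List (ℤ × ℤ) → Bool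
  | [], _ => false
  | y :: ys, L => (ballRows s).all fun j =>
    let c : ℤ × ℤ := (halfWidth s y + 1 + halfWidth s j, y + j)
    L.any (BallsConflict s c) || contourBlocked s ys (c :: L)

lemma contourBlocked_of_lt :
    ∀ s < 121, 5 ≤ s → s ≠ 8 → contourBlocked s (ballRows s) [0] = true := by
  decide +kernel

namespace IsPerfectCode

variable {s : ℕ} {C : Set (ℤ × ℤ)}

lemma eq_of_mem (h : IsPerfectCode s C) {c d z : ℤ × ℤ} (hc : c ∈ C) (hd : d ∈ C)
    (hzc : z ∈ latticeBall s c) (hzd : z ∈ latticeBall s d) : c = d :=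
  (h z).unique ⟨hc, hzc⟩ ⟨hd, hzd⟩

lemma preimage_add_right (h : IsPerfectCode s C) (a : ℤ × ℤ) :
    IsPerfectCode s ((· + a) ⁻¹' C) := by
  intro z
  refine ((Equiv.addRight a).existsUnique_congr fun c => ?_).mpr (h (z + a))
  simp [latticeBall]

lemma exists_zero_mem (h : IsPerfectCode s C) : ∃ C', IsPerfectCode s C' ∧ 0 ∈ C' := by
  obtain ⟨a, ⟨ha, -⟩, -⟩ := h 0
  exact ⟨_, h.preimage_add_right a, by simpa using ha⟩

lemma lt_norm_sub (h : IsPerfectCode s C) {c d : ℤ × ℤ} (hc : c ∈ C) (hd : d ∈ C) (hne : c ≠ d) :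
    2 * √s - 3 / 2 < ‖toComplex c - toComplex d‖ := by
  by_contra! hle
  obtain ⟨p, hp⟩ := exists_norm_sub_toComplex_lt (midpoint ℝ (toComplex c) (toComplex d))
  rw [← dist_eq_norm, dist_comm] at hp
  rw [← dist_eq_norm] at hle
  refine hne (h.eq_of_mem (z := p) hc hd ?_ ?_) <;>
    rw [mem_latticeBall_iff_norm_sub_le, ← dist_eq_norm]
  · have := dist_triangle (toComplex p) (midpoint ℝ (toComplex c) (toComplex d)) (toComplex c)
    rw [dist_midpoint_left, Real.norm_ofNat] at this
    linarith
  · have := dist_triangle (toComplex p) (midpoint ℝ (toComplex c) (toComplex d)) (toComplex d)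
    rw [dist_midpoint_right, Real.norm_ofNat] at this
    linarith

lemma exists_norm_le (h : IsPerfectCode s C) :
    ∃ c ∈ C, c ≠ 0 ∧ ‖toComplex c‖ ≤ 2 * √s + 1 := by
  obtain ⟨c, ⟨hc, hmem⟩, -⟩ := h (Nat.sqrt s + 1, 0)
  refine ⟨c, hc, ?_, ?_⟩
  · rintro rfl
    have : s < (Nat.sqrt s + 1) ^ 2 := Nat.lt_succ_sqrt' s
    zify at this
    simp only [latticeBall, Set.mem_ofPred_eq, Prod.fst_zero, Prod.snd_zero] at hmem
    linarith
  · have hpoint : ‖toComplex (Nat.sqrt s + 1, 0)‖ = Nat.sqrt s + 1 := by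
      have : toComplex (Nat.sqrt s + 1, 0) = ((Nat.sqrt s + 1 : ℕ) : ℂ) := by
        simp [toComplex, Complex.ext_iff]
      rw [this, Complex.norm_natCast, Nat.cast_succ]
    rw [mem_latticeBall_iff_norm_sub_le, norm_sub_rev] at hmem
    have := norm_le_norm_add_norm_sub' (toComplex c) (toComplex (Nat.sqrt s + 1, 0))
    have := Real.nat_sqrt_le_real_sqrt (a := s)
    linarith

lemma exists_three_centres (h : IsPerfectCode s C) (h0 : 0 ∈ C) :
    ∃ a ∈ C, ∃ b ∈ C, ∃ c ∈ C, a ≠ b ∧ b ≠ c ∧ c ≠ a ∧ ∃ z : ℂ, ‖toComplex a - z‖ ≤ √s + 3 / 4 ∧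
      ‖toComplex b - z‖ ≤ √s + 3 / 4 ∧ ‖toComplex c - z‖ ≤ √s + 3 / 4 := by
  obtain ⟨b, hb, hb0, hb_le⟩ := h.exists_norm_le
  have hb0' : toComplex b ≠ 0 := toComplex_zero ▸ toComplex_injective.ne hb0
  obtain ⟨z, hz0, hzb⟩ := exists_norm_eq_and_norm_sub_eq (R := √s + 3 / 4) hb0' (by linarith)
  obtain ⟨p, hp⟩ := exists_norm_sub_toComplex_lt z
  obtain ⟨c, ⟨hc, hpc⟩, -⟩ := h p
  have centre_ne {d : ℤ × ℤ} (hd : ‖z - toComplex d‖ = √s + 3 / 4) : c ≠ d := by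
    rintro rfl
    rw [mem_latticeBall_iff_norm_sub_le] at hpc
    have := norm_sub_le_norm_sub_add_norm_sub z (toComplex p) (toComplex c)
    linarith
  refine ⟨0, h0, b, hb, c, hc, hb0.symm, (centre_ne hzb).symm, centre_ne ?_, z, ?_, ?_, ?_⟩
  · rwa [toComplex_zero, sub_zero]
  · rw [toComplex_zero, zero_sub, norm_neg, hz0]
  · rw [norm_sub_rev, hzb]
  · rw [mem_latticeBall_iff_norm_sub_le] at hpc
    have := norm_sub_le_norm_sub_add_norm_sub z (toComplex p) (toComplex c)
    rw [norm_sub_rev]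
    linarith

lemma lt_one_hundred_twenty_one (h : IsPerfectCode s C) (h0 : 0 ∈ C) : s < 121 := by
  obtain ⟨a, ha, b, hb, c, hc, hab, hbc, hca, z, hza, hzb, hzc⟩ := h.exists_three_centres h0
  by_contra! hs
  have hr : 11 ≤ √s := Real.le_sqrt_of_sq_le (by norm_num; exact_mod_cast hs)
  have := sq_lt_three_mul_sq_of_lt_norm_sub (by linarith) hza hzb hzc (h.lt_norm_sub ha hb hab)
    (h.lt_norm_sub hb hc hbc) (h.lt_norm_sub hc ha hca)
  nlinarith

lemma not_ballsConflict (h : IsPerfectCode s C) {c d : ℤ × ℤ} (hc : c ∈ C) (hd : d ∈ C) :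
    ¬ BallsConflict s c d := by
  rintro ⟨hne, y, -, hyc, hyd⟩
  exact hne (h.eq_of_mem hc hd hyc hyd)

lemma exists_right_of_row (h : IsPerfectCode s C) (h0 : 0 ∈ C) {y : ℤ} (hy : y ∈ ballRows s) :
    ∃ j ∈ ballRows s, ((halfWidth s y + 1 + halfWidth s j, y + j) : ℤ × ℤ) ∈ C := by
  obtain ⟨⟨c₁, c₂⟩, ⟨hc, hmem⟩, -⟩ := h (halfWidth s y + 1, y)
  have right_notMem : ((halfWidth s y + 1, y) : ℤ × ℤ) ∉ latticeBall s 0 := by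
    simpa [latticeBall] using lt_sq_halfWidth_add_one_add_sq s y
  have end_mem : ((halfWidth s y, y) : ℤ × ℤ) ∈ latticeBall s 0 := by
    simpa [latticeBall] using sq_halfWidth_add_sq_le (mem_ballRows.mp hy)
  have end_notMem : ((halfWidth s y, y) : ℤ × ℤ) ∉ latticeBall s (c₁, c₂) := fun hend =>
    right_notMem (h.eq_of_mem hc h0 hend end_mem ▸ hmem)
  simp only [latticeBall, Set.mem_ofPred_eq, not_le] at hmem end_notMem
  have hwidth : c₁ - (halfWidth s y + 1) = halfWidth s (c₂ - y) :=
    eq_halfWidth (by linarith) (by linarith)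
  refine ⟨c₂ - y, mem_ballRows.mpr (by nlinarith), ?_⟩
  rwa [← hwidth, add_sub_cancel, add_sub_cancel]

lemma contourBlocked_eq_false (h : IsPerfectCode s C) (h0 : 0 ∈ C) :
    ∀ ys ⊆ ballRows s, ∀ L : List (ℤ × ℤ), (∀ d ∈ L, d ∈ C) → contourBlocked s ys L = false
  | [], _, _, _ => rfl
  | y :: ys, hys, L, hL => by
    obtain ⟨hy, hys⟩ := List.cons_subset.mp hys
    obtain ⟨j, hj, hc⟩ := h.exists_right_of_row h0 hy
    rw [contourBlocked, List.all_eq_false]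
    refine ⟨j, hj, ?_⟩
    rw [Bool.not_eq_true, Bool.or_eq_false_iff, List.any_eq_false]
    exact ⟨fun d hd => by simpa using h.not_ballsConflict hc (hL d hd),
      h.contourBlocked_eq_false h0 ys hys _ (List.forall_mem_cons.mpr ⟨hc, hL⟩)⟩

lemma le_four_or_eq_eight (h : IsPerfectCode s C) : s ≤ 4 ∨ s = 8 := by
  obtain ⟨C', h', h0⟩ := h.exists_zero_mem
  by_contra! hs
  have blocked := contourBlocked_of_lt s (h'.lt_one_hundred_twenty_one h0) (by omega) hs.2
  have not_blocked := h'.contourBlocked_eq_false h0 (ballRows s) (List.Subset.refl _) [0]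
    (by simpa using h0)
  exact Bool.false_ne_true (not_blocked.symm.trans blocked)

end IsPerfectCode

lemma sq_add_sq_ne_three (x y : ℤ) : x ^ 2 + y ^ 2 ≠ 3 := by
  have mod_four : ∀ a b : ZMod 4, a ^ 2 + b ^ 2 ≠ 3 := by decide
  exact fun h => mod_four x y (by exact_mod_cast congrArg (Int.cast : ℤ → ZMod 4) h)

theorem perfect_codes_Z2_l2_general (s : ℤ) (hs : 1 ≤ s) (C : Set (ℤ × ℤ))
    (h : ∀ z : ℤ × ℤ, ∃! c, c ∈ C ∧ (z.1 - c.1) ^ 2 + (z.2 - c.2) ^ 2 ≤ s) :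
    ∃ t ∈ ({1, 2, 4, 8} : Set ℤ),
      {x : ℤ × ℤ | x.1 ^ 2 + x.2 ^ 2 ≤ s} = {x : ℤ × ℤ | x.1 ^ 2 + x.2 ^ 2 ≤ t} := by
  lift s to ℕ using by omega
  have hs' : s = 1 ∨ s = 2 ∨ s = 3 ∨ s = 4 ∨ s = 8 := by
    have := IsPerfectCode.le_four_or_eq_eight h
    omega
  obtain rfl | rfl | rfl | rfl | rfl := hs'
  · exact ⟨1, by simp, rfl⟩
  · exact ⟨2, by simp, rfl⟩
  · refine ⟨2, by simp, Set.ext fun x => ?_⟩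
    have := sq_add_sq_ne_three x.1 x.2
    simp only [Set.mem_ofPred_eq, Nat.cast_ofNat]
    omega
  · exact ⟨4, by simp, rfl⟩
  · exact ⟨8, by simp, rfl⟩

/-- If the translates of the `ℓ_2` ball `B = {x ∈ ℤ² : x₁² + x₂² ≤ s}` by an additive
subgroup `Λ` of `ℤ²` partition `ℤ²`, then `B` is the ℓ₂ ball of squared radius
`t ∈ {1, 2, 4, 8}`: there are no linear `r`-perfect codes in `ℤ²` in the `ℓ_2` metric
unless `r ∈ {1, √2, 2, 2√2}`. -/
theorem perfect_codes_Z2_l2 (s : ℤ) (hs : 1 ≤ s) (Λ : AddSubgroup (ℤ × ℤ))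
    (h : ∀ z : ℤ × ℤ, ∃! c, c ∈ Λ ∧ (z.1 - c.1) ^ 2 + (z.2 - c.2) ^ 2 ≤ s) :
    ∃ t ∈ ({1, 2, 4, 8} : Set ℤ),
      {x : ℤ × ℤ | x.1 ^ 2 + x.2 ^ 2 ≤ s} = {x : ℤ × ℤ | x.1 ^ 2 + x.2 ^ 2 ≤ t} :=
  perfect_codes_Z2_l2_general s hs Λ h
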